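/- The function q ↦ 1 - Θ(q), where Θ(q) = Σ_{n∈ℤ} (-1)^n q^{n²} = 1 + 2·Σ_{n≥1}(-1)^n q^{n²}, is a valid cumulative distribution function on [0,1]: it is nondecreasing on [0,1), tends to 0 as q → 0⁺, and tends to 1 as q → 1⁻. In particular, by the Jacobi triple product, Θ(q) = ∏_{j=1}^{∞}(1-q^{2j})(1-q^{2j-1})² for 0 ≤ q < 1, so Θ(q) → 0 as q → 1⁻. -/

import Mathlib

open Filter Set

/-- The Jacobi theta function `Θ(q) = 1 + 2 ∑_{n≥1} (-1)^n q^{n²}`. -/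
noncomputable def jacobiThetaQ (q : ℝ) : ℝ :=
  1 + 2 * ∑' n : ℕ, (-1 : ℝ) ^ (n + 1) * q ^ ((n + 1) ^ 2)

/-!
The triple product is obtained as the limit of its finite form
`∑ₖ z ^ k q ^ (k ^ 2) [2n, n + k]_{q²} = ∏_{j < n} (1 + z q ^ (2j + 1)) (1 + z⁻¹ q ^ (2j + 1))`,
an induction on `n` by a Pascal-type rule for the central Gaussian binomials. As `n → ∞` the
binomials stay bounded and converge to `1 / ∏ (1 - q ^ (2j + 2))`, so dominated convergence applies.
At `z = -1` every factor of the product decreases from `1` to `0` as `q` runs through `[0, 1]`: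
hence `Θ` decreases, and it tends to `0` at `1` because its first factor does. Near `0`, the
alternating series gives `1 - 2q ≤ Θ(q)`.
-/

open Topology

section FiniteTripleProduct

variable {𝕜 : Type*} [Field 𝕜] {z q : 𝕜}

/-- The finite `q`-Pochhammer symbol `(a; q)ₙ`; the case `a = q` supplies the `q`-factorials in
Gaussian binomials. -/
def qPochhammer (a q : 𝕜) (n : ℕ) : 𝕜 := ∏ i ∈ Finset.range n, (1 - a * q ^ i)

/-- The reciprocal `1 / (q; q)ₘ`, extended by zero to negative `m`: with this convention the
recursion `invQPochhammer_sub_one` holds for all integers, and Gaussian binomials built from it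
vanish outside their range. -/
def invQPochhammer (q : 𝕜) : ℤ → 𝕜
  | Int.ofNat n => (qPochhammer q q n)⁻¹
  | Int.negSucc _ => 0

/-- The Gaussian binomial coefficient `[2n, n + k]_q`, indexed by the offset `k` from the centre
and equal to zero for `n < |k|`; these are the coefficients of the finite triple product. -/
def centralQBinom (q : 𝕜) (n : ℕ) (k : ℤ) : 𝕜 :=
  qPochhammer q q (2 * n) * (invQPochhammer q (n - k) * invQPochhammer q (n + k))

/-- The general term of the two-variable theta series, summed over all integers `k` in the Jacobi
triple product; `Θ(q)` is the case `z = -1`. -/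
def jacobiThetaTerm (z q : 𝕜) (k : ℤ) : 𝕜 := z ^ k * q ^ (k ^ 2)

lemma qPochhammer_succ (a q : 𝕜) (n : ℕ) :
    qPochhammer a q (n + 1) = qPochhammer a q n * (1 - a * q ^ n) :=
  Finset.prod_range_succ _ _

lemma invQPochhammer_of_neg (q : 𝕜) {m : ℤ} (hm : m < 0) : invQPochhammer q m = 0 := by
  obtain ⟨n, rfl⟩ := Int.eq_negSucc_of_lt_zero hm
  rfl

lemma invQPochhammer_sub_one (hq : ∀ n : ℕ, q ^ (n + 1) ≠ 1) (m : ℤ) :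
    invQPochhammer q (m - 1) = (1 - q ^ m) * invQPochhammer q m := by
  rcases lt_trichotomy m 0 with hm | rfl | hm
  · rw [invQPochhammer_of_neg q hm, invQPochhammer_of_neg q (by lia), mul_zero]
  · simp [invQPochhammer_of_neg]
  · obtain ⟨n, rfl⟩ : ∃ n : ℕ, m = (n + 1 : ℕ) := ⟨(m - 1).toNat, by lia⟩
    have hfactor : 1 - q * q ^ n ≠ 0 := sub_ne_zero.2 (pow_succ' q n ▸ (hq n).symm)
    calc invQPochhammer q ((n + 1 : ℕ) - 1)
        = (qPochhammer q q n)⁻¹ := by rw [Nat.cast_succ, add_sub_cancel_right]; rfl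
      _ = (1 - q * q ^ n) * (qPochhammer q q (n + 1))⁻¹ := by
          rw [qPochhammer_succ, mul_inv_rev, mul_inv_cancel_left₀ hfactor]
      _ = (1 - q ^ ((n + 1 : ℕ) : ℤ)) * invQPochhammer q (n + 1 : ℕ) := by
          rw [zpow_natCast, pow_succ']; rfl

lemma centralQBinom_zero (q : 𝕜) (k : ℤ) : centralQBinom q 0 k = if k = 0 then 1 else 0 := by
  rcases lt_trichotomy k 0 with hk | rfl | hk
  · simp [centralQBinom, hk.ne, invQPochhammer_of_neg q hk]
  · simp [centralQBinom, invQPochhammer, qPochhammer]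
  · simp [centralQBinom, hk.ne', invQPochhammer_of_neg q (neg_lt_zero.2 hk)]

lemma centralQBinom_succ (hq₀ : q ≠ 0) (hq : ∀ n : ℕ, q ^ (n + 1) ≠ 1) (n : ℕ) (k : ℤ) :
    centralQBinom q (n + 1) k = (1 + q ^ (2 * n + 1)) * centralQBinom q n k
      + q * q ^ (n - k) * centralQBinom q n (k - 1)
      + q * q ^ (n + k) * centralQBinom q n (k + 1) := by
  have lower (m : ℤ) : invQPochhammer q (m - 1) = (1 - q ^ m) * invQPochhammer q m :=
    invQPochhammer_sub_one hq m
  have raise (m : ℤ) : invQPochhammer q m = (1 - q ^ m * q) * invQPochhammer q (m + 1) := by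
    simpa [zpow_add_one₀ hq₀] using lower (m + 1)
  have hsplit : q ^ (2 * n) = q ^ (n - k) * q ^ (n + k) := by
    rw [← zpow_add₀ hq₀, ← zpow_natCast]; congr 1; push_cast; ring
  simp only [centralQBinom, Nat.cast_succ, mul_add_one, qPochhammer_succ]
  rw [show (n : ℤ) + 1 - k = n - k + 1 by ring, show (n : ℤ) + 1 + k = n + k + 1 by ring,
    show (n : ℤ) - (k - 1) = n - k + 1 by ring, show (n : ℤ) + (k - 1) = n + k - 1 by ring,
    show (n : ℤ) - (k + 1) = n - k - 1 by ring, show (n : ℤ) + (k + 1) = n + k + 1 by ring,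
    lower (n - k), lower (n + k), raise (n - k), raise (n + k), pow_succ, hsplit]
  ring

lemma jacobiThetaTerm_neg (z q : 𝕜) (k : ℤ) :
    jacobiThetaTerm z q (-k) = jacobiThetaTerm z⁻¹ q k := by
  simp [jacobiThetaTerm]

lemma jacobiThetaTerm_mul_zpow_sub (hz : z ≠ 0) (hq₀ : q ≠ 0) (n k : ℤ) :
    jacobiThetaTerm z q k * (q ^ 2 * (q ^ 2) ^ (n - k)) =
      z * q ^ (2 * n + 1) * jacobiThetaTerm z q (k - 1) := by
  have hexp : q ^ (k ^ 2) * (q ^ 2 * (q ^ 2) ^ (n - k)) = q ^ (2 * n + 1) * q ^ ((k - 1) ^ 2) := by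
    rw [← zpow_ofNat q 2, ← zpow_mul, ← zpow_add₀ hq₀, ← zpow_add₀ hq₀, ← zpow_add₀ hq₀]
    congr 1
    ring
  rw [jacobiThetaTerm, jacobiThetaTerm, mul_assoc, hexp, zpow_sub_one₀ hz]
  field_simp

lemma jacobiThetaTerm_mul_zpow_add (hz : z ≠ 0) (hq₀ : q ≠ 0) (n k : ℤ) :
    jacobiThetaTerm z q k * (q ^ 2 * (q ^ 2) ^ (n + k)) =
      z⁻¹ * q ^ (2 * n + 1) * jacobiThetaTerm z q (k + 1) := by
  have h := jacobiThetaTerm_mul_zpow_sub (inv_ne_zero hz) hq₀ n (-k)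
  rwa [jacobiThetaTerm_neg, inv_inv, sub_neg_eq_add, ← neg_add', jacobiThetaTerm_neg, inv_inv] at h

lemma jacobiThetaTerm_mul_centralQBinom_succ (hz : z ≠ 0) (hq₀ : q ≠ 0)
    (hq : ∀ n : ℕ, (q ^ 2) ^ (n + 1) ≠ 1) (n : ℕ) (k : ℤ) :
    jacobiThetaTerm z q k * centralQBinom (q ^ 2) (n + 1) k =
      (1 + (q ^ 2) ^ (2 * n + 1)) * (jacobiThetaTerm z q k * centralQBinom (q ^ 2) n k)
      + z * q ^ (2 * n + 1) * (jacobiThetaTerm z q (k - 1) * centralQBinom (q ^ 2) n (k - 1))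
      + z⁻¹ * q ^ (2 * n + 1) *
        (jacobiThetaTerm z q (k + 1) * centralQBinom (q ^ 2) n (k + 1)) := by
  have hsub := jacobiThetaTerm_mul_zpow_sub hz hq₀ n k
  have hadd := jacobiThetaTerm_mul_zpow_add hz hq₀ n k
  rw [show (2 * n + 1 : ℤ) = (2 * n + 1 : ℕ) by push_cast; rfl, zpow_natCast] at hsub hadd
  rw [centralQBinom_succ (pow_ne_zero 2 hq₀) hq]
  linear_combination
    centralQBinom (q ^ 2) n (k - 1) * hsub + centralQBinom (q ^ 2) n (k + 1) * hadd

theorem hasSum_jacobiThetaTerm_mul_centralQBinom [TopologicalSpace 𝕜] [IsTopologicalSemiring 𝕜]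
    (hz : z ≠ 0) (hq₀ : q ≠ 0) (hq : ∀ n : ℕ, (q ^ 2) ^ (n + 1) ≠ 1) (n : ℕ) :
    HasSum (fun k ↦ jacobiThetaTerm z q k * centralQBinom (q ^ 2) n k)
      (∏ j ∈ Finset.range n, (1 + z * q ^ (2 * j + 1)) * (1 + z⁻¹ * q ^ (2 * j + 1))) := by
  induction n with
  | zero =>
    have hterm (k : ℤ) :
        jacobiThetaTerm z q k * centralQBinom (q ^ 2) 0 k = if k = 0 then 1 else 0 := by
      rw [centralQBinom_zero]
      split_ifs with hk <;> simp [jacobiThetaTerm, hk]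
    simpa only [hterm, Finset.prod_range_zero] using hasSum_ite_eq (0 : ℤ) (1 : 𝕜)
  | succ n ih =>
    have hpred := ((Equiv.subRight (1 : ℤ)).hasSum_iff.2 ih).mul_left (z * q ^ (2 * n + 1))
    have hsucc := ((Equiv.addRight (1 : ℤ)).hasSum_iff.2 ih).mul_left (z⁻¹ * q ^ (2 * n + 1))
    have hfactor : (1 + z * q ^ (2 * n + 1)) * (1 + z⁻¹ * q ^ (2 * n + 1)) =
        1 + (q ^ 2) ^ (2 * n + 1) + z * q ^ (2 * n + 1) + z⁻¹ * q ^ (2 * n + 1) := by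
      field_simp
      ring
    rw [Finset.prod_range_succ, mul_comm, hfactor, add_mul, add_mul]
    exact (((ih.mul_left _).add hpred).add hsucc).congr_fun
      (jacobiThetaTerm_mul_centralQBinom_succ hz hq₀ hq n)

end FiniteTripleProduct

section TripleProduct

variable {𝕜 : Type*} [NormedField 𝕜] {q : 𝕜}

lemma pow_ne_one_of_norm_lt_one (hq : ‖q‖ < 1) {n : ℕ} (hn : n ≠ 0) : q ^ n ≠ 1 := fun h ↦
  (pow_lt_one₀ (norm_nonneg q) hq hn).ne <| by rw [← norm_pow, h, norm_one]

lemma summable_norm_jacobiThetaTerm_natCast (z : 𝕜) (hq : ‖q‖ < 1) :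
    Summable fun n : ℕ ↦ ‖jacobiThetaTerm z q n‖ := by
  have hratio : Tendsto (fun n : ℕ ↦ ‖z‖ * ‖q‖ ^ n) atTop (𝓝 0) := by
    simpa using (tendsto_pow_atTop_nhds_zero_of_lt_one (norm_nonneg q) hq).const_mul ‖z‖
  refine .of_norm_bounded_eventually_nat summable_geometric_two ?_
  filter_upwards [hratio.eventually_le_const one_half_pos] with n hn
  calc ‖‖jacobiThetaTerm z q n‖‖ = (‖z‖ * ‖q‖ ^ n) ^ n := by
        rw [norm_norm, jacobiThetaTerm, ← Nat.cast_pow, zpow_natCast, zpow_natCast, norm_mul,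
          norm_pow, norm_pow, mul_pow, ← pow_mul, sq]
    _ ≤ (1 / 2) ^ n := by gcongr

lemma summable_norm_jacobiThetaTerm (z : 𝕜) (hq : ‖q‖ < 1) :
    Summable fun k ↦ ‖jacobiThetaTerm z q k‖ := by
  refine .of_nat_of_neg (summable_norm_jacobiThetaTerm_natCast z hq) ?_
  simpa only [jacobiThetaTerm_neg] using summable_norm_jacobiThetaTerm_natCast z⁻¹ hq

lemma summable_norm_mul_pow (a : 𝕜) (hq : ‖q‖ < 1) : Summable fun i : ℕ ↦ ‖-(a * q ^ i)‖ := by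
  simpa only [norm_neg, norm_mul, norm_pow] using
    (summable_geometric_of_lt_one (norm_nonneg q) hq).mul_left ‖a‖

variable [CompleteSpace 𝕜]

lemma multipliable_one_sub_mul_pow (a : 𝕜) (hq : ‖q‖ < 1) :
    Multipliable fun i : ℕ ↦ 1 - a * q ^ i := by
  simpa only [sub_eq_add_neg] using multipliable_one_add_of_summable (summable_norm_mul_pow a hq)

lemma tprod_one_sub_mul_pow_ne_zero {a : 𝕜} (hq : ‖q‖ < 1) (ha : ∀ i : ℕ, a * q ^ i ≠ 1) :
    ∏' i : ℕ, (1 - a * q ^ i) ≠ 0 := by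
  simpa only [sub_eq_add_neg] using tprod_one_add_ne_zero_of_summable
    (fun i ↦ by simpa only [← sub_eq_add_neg] using sub_ne_zero.2 (ha i).symm)
    (summable_norm_mul_pow a hq)

lemma tendsto_qPochhammer (a : 𝕜) (hq : ‖q‖ < 1) :
    Tendsto (qPochhammer a q) atTop (𝓝 (∏' i : ℕ, (1 - a * q ^ i))) :=
  (multipliable_one_sub_mul_pow a hq).hasProd.tendsto_prod_nat

lemma tprod_one_sub_pow_ne_zero (hq : ‖q‖ < 1) : ∏' i : ℕ, (1 - q * q ^ i) ≠ 0 :=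
  tprod_one_sub_mul_pow_ne_zero hq fun i ↦ by
    simpa only [pow_succ'] using pow_ne_one_of_norm_lt_one hq i.succ_ne_zero

lemma tendsto_invQPochhammer (hq : ‖q‖ < 1) :
    Tendsto (invQPochhammer q) atTop (𝓝 (∏' i : ℕ, (1 - q * q ^ i))⁻¹) := by
  rw [← Nat.map_cast_int_atTop, tendsto_map'_iff]
  exact (tendsto_qPochhammer q hq).inv₀ (tprod_one_sub_pow_ne_zero hq)

lemma exists_norm_invQPochhammer_le (hq : ‖q‖ < 1) : ∃ C, ∀ m, ‖invQPochhammer q m‖ ≤ C := by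
  obtain ⟨C, hC⟩ :=
    ((tendsto_qPochhammer q hq).inv₀ (tprod_one_sub_pow_ne_zero hq)).norm.bddAbove_range
  refine ⟨max C 0, ?_⟩
  rintro (n | _)
  · exact (hC ⟨n, rfl⟩).trans (le_max_left _ _)
  · exact norm_zero.trans_le (le_max_right _ _)

lemma exists_norm_centralQBinom_le (hq : ‖q‖ < 1) : ∃ C, ∀ n k, ‖centralQBinom q n k‖ ≤ C := by
  obtain ⟨A, hA⟩ := (tendsto_qPochhammer q hq).norm.bddAbove_range
  obtain ⟨B, hB⟩ := exists_norm_invQPochhammer_le hq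
  refine ⟨A * (B * B), fun n k ↦ ?_⟩
  have hB₀ : 0 ≤ B := (norm_nonneg _).trans (hB 0)
  rw [centralQBinom, norm_mul, norm_mul]
  gcongr
  · exact (norm_nonneg _).trans (hA ⟨0, rfl⟩)
  · exact hA ⟨2 * n, rfl⟩
  · exact hB _
  · exact hB _

lemma tendsto_centralQBinom (hq : ‖q‖ < 1) (k : ℤ) :
    Tendsto (centralQBinom q · k) atTop (𝓝 (∏' i : ℕ, (1 - q * q ^ i))⁻¹) := by
  have hsub : Tendsto (fun n : ℕ ↦ (n - k : ℤ)) atTop atTop :=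
    tendsto_atTop_add_const_right _ (-k) tendsto_natCast_atTop_atTop
  have hadd : Tendsto (fun n : ℕ ↦ (n + k : ℤ)) atTop atTop :=
    tendsto_atTop_add_const_right _ k tendsto_natCast_atTop_atTop
  have hdouble : Tendsto (fun n : ℕ ↦ 2 * n) atTop atTop := tendsto_id.const_mul_atTop' two_pos
  have hinv := tendsto_invQPochhammer hq
  have hlim :=
    ((tendsto_qPochhammer q hq).comp hdouble).mul ((hinv.comp hsub).mul (hinv.comp hadd))
  rwa [mul_inv_cancel_left₀ (tprod_one_sub_pow_ne_zero hq)] at hlim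

lemma tendsto_tsum_jacobiThetaTerm_mul_centralQBinom (z : 𝕜) {p : 𝕜} (hq : ‖q‖ < 1)
    (hp : ‖p‖ < 1) :
    Tendsto (fun n ↦ ∑' k, jacobiThetaTerm z q k * centralQBinom p n k) atTop
      (𝓝 ((∑' k, jacobiThetaTerm z q k) * (∏' i : ℕ, (1 - p * p ^ i))⁻¹)) := by
  obtain ⟨C, hC⟩ := exists_norm_centralQBinom_le hp
  rw [← tsum_mul_right]
  refine tendsto_tsum_of_dominated_convergence
    ((summable_norm_jacobiThetaTerm z hq).mul_right C)
    (fun k ↦ (tendsto_centralQBinom hp k).const_mul _) (.of_forall fun n k ↦ ?_)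
  rw [norm_mul]
  gcongr
  exact hC n k

lemma multipliable_jacobi_triple_product (z : 𝕜) (hq : ‖q‖ < 1) :
    Multipliable fun j : ℕ ↦ (1 - q ^ (2 * (j + 1))) *
      ((1 + z * q ^ (2 * j + 1)) * (1 + z⁻¹ * q ^ (2 * j + 1))) := by
  have hq2 : ‖q ^ 2‖ < 1 := by
    simpa only [norm_pow] using pow_lt_one₀ (norm_nonneg q) hq two_ne_zero
  convert (multipliable_one_sub_mul_pow (q ^ 2) hq2).mul
    ((multipliable_one_sub_mul_pow (-(z * q)) hq2).mul
      (multipliable_one_sub_mul_pow (-(z⁻¹ * q)) hq2)) using 2 with j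
  ring

theorem hasProd_jacobi_triple_product {z : 𝕜} (hz : z ≠ 0) (hq : ‖q‖ < 1) :
    HasProd (fun j : ℕ ↦ (1 - q ^ (2 * (j + 1))) *
        ((1 + z * q ^ (2 * j + 1)) * (1 + z⁻¹ * q ^ (2 * j + 1))))
      (∑' k, jacobiThetaTerm z q k) := by
  have hmult := multipliable_jacobi_triple_product z hq
  rw [hmult.hasProd_iff_tendsto_nat]
  rcases eq_or_ne q 0 with rfl | hq₀
  · rw [tsum_eq_single 0 fun k hk ↦ by simp [jacobiThetaTerm, zero_zpow, hk]]
    simp [jacobiThetaTerm]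
  have hq2 : ‖q ^ 2‖ < 1 := by
    simpa only [norm_pow] using pow_lt_one₀ (norm_nonneg q) hq two_ne_zero
  have hfinite := hasSum_jacobiThetaTerm_mul_centralQBinom hz hq₀
    fun n ↦ pow_ne_one_of_norm_lt_one hq2 n.succ_ne_zero
  have hlim := (tendsto_qPochhammer (q ^ 2) hq2).mul
    (tendsto_tsum_jacobiThetaTerm_mul_centralQBinom z hq hq2)
  rw [mul_left_comm, mul_inv_cancel₀ (tprod_one_sub_pow_ne_zero hq2), mul_one] at hlim
  refine hlim.congr fun n ↦ ?_
  rw [(hfinite n).tsum_eq, qPochhammer, ← Finset.prod_mul_distrib]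
  simp only [← pow_mul, ← pow_add, mul_add_one, add_comm]

end TripleProduct

section OrderedProduct

variable {ι R : Type*} [CommMonoidWithZero R] [PartialOrder R] [ZeroLEOneClass R] [PosMulMono R]
  [TopologicalSpace R] [OrderClosedTopology R] {f g : ι → R} {a b : R}

lemma hasProd_nonneg (h : ∀ i, 0 ≤ f i) (hf : HasProd f a) : 0 ≤ a :=
  ge_of_tendsto' hf fun _ ↦ Finset.prod_nonneg fun i _ ↦ h i

lemma hasProd_le_hasProd_of_nonneg (h₀ : ∀ i, 0 ≤ f i) (h : ∀ i, f i ≤ g i) (hf : HasProd f a)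
    (hg : HasProd g b) : a ≤ b :=
  le_of_tendsto_of_tendsto' hf hg fun _ ↦ Finset.prod_le_prod (fun i _ ↦ h₀ i) fun i _ ↦ h i

lemma hasProd_le_apply_of_le_one (h₀ : ∀ i, 0 ≤ f i) (h₁ : ∀ i, f i ≤ 1) (hf : HasProd f a)
    (i : ι) : a ≤ f i := by
  classical
  refine hasProd_le_hasProd_of_nonneg h₀ (fun j ↦ ?_) hf (hasProd_ite_eq i (f i))
  split_ifs with hj
  · rw [hj]
  · exact h₁ j

end OrderedProduct

section Theta

variable {q : ℝ}

lemma jacobiThetaTerm_neg_one_add_one (q : ℝ) (n : ℕ) :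
    jacobiThetaTerm (-1) q (n + 1) = (-1) ^ (n + 1) * q ^ ((n + 1) ^ 2) := by
  simp only [jacobiThetaTerm, ← Nat.cast_succ, ← Nat.cast_pow, zpow_natCast]

lemma hasSum_jacobiThetaTerm_neg_one_add_one (hq : |q| < 1) :
    HasSum (fun n : ℕ ↦ jacobiThetaTerm (-1) q (n + 1)) ((jacobiThetaQ q - 1) / 2) := by
  have hsum : Summable fun n : ℕ ↦ jacobiThetaTerm (-1) q (n + 1) :=
    (summable_norm_jacobiThetaTerm (-1 : ℝ) hq).of_norm.comp_injective
      ((add_left_injective 1).comp Nat.cast_injective)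
  have hvalue : (jacobiThetaQ q - 1) / 2 = ∑' n : ℕ, jacobiThetaTerm (-1) q (n + 1) := by
    simp only [jacobiThetaQ, jacobiThetaTerm_neg_one_add_one]
    ring
  exact hvalue ▸ hsum.hasSum

theorem hasSum_jacobiThetaTerm_neg_one (hq : |q| < 1) :
    HasSum (jacobiThetaTerm (-1) q) (jacobiThetaQ q) := by
  have hpos := hasSum_jacobiThetaTerm_neg_one_add_one hq
  have hneg :
      HasSum (fun n : ℕ ↦ jacobiThetaTerm (-1) q (-(n + 1))) ((jacobiThetaQ q - 1) / 2) := by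
    simpa only [jacobiThetaTerm_neg, inv_neg_one] using hpos
  convert hpos.of_add_one_of_neg_add_one hneg using 1
  rw [show jacobiThetaTerm (-1) q 0 = 1 by simp [jacobiThetaTerm]]
  ring

theorem hasProd_jacobiThetaQ (hq : |q| < 1) :
    HasProd (fun j : ℕ ↦ (1 - q ^ (2 * (j + 1))) * (1 - q ^ (2 * (j + 1) - 1)) ^ 2)
      (jacobiThetaQ q) := by
  have h := hasProd_jacobi_triple_product (neg_ne_zero.2 (one_ne_zero (α := ℝ))) hq
  rw [(hasSum_jacobiThetaTerm_neg_one hq).tsum_eq] at h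
  refine h.congr_fun fun j ↦ ?_
  rw [show 2 * (j + 1) - 1 = 2 * j + 1 by lia, inv_neg_one, neg_one_mul, ← sub_eq_add_neg, ← sq]

lemma antitoneOn_one_sub_pow_mul_one_sub_pow_sq (m n : ℕ) :
    AntitoneOn (fun q : ℝ ↦ (1 - q ^ m) * (1 - q ^ n) ^ 2) (Icc 0 1) := by
  intro p hp q hq hpq
  have hp₀ := hp.1
  have hm : 0 ≤ 1 - p ^ m := sub_nonneg.2 (pow_le_one₀ hp.1 hp.2)
  have hn : 0 ≤ 1 - q ^ n := sub_nonneg.2 (pow_le_one₀ hq.1 hq.2)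
  dsimp only
  gcongr

lemma one_sub_pow_mul_one_sub_pow_sq_mem_Icc (m n : ℕ) (hq : q ∈ Icc 0 1) :
    (1 - q ^ m) * (1 - q ^ n) ^ 2 ∈ Icc 0 1 := by
  have hpow (k : ℕ) : q ^ k ∈ Icc 0 1 := ⟨pow_nonneg hq.1 k, pow_le_one₀ hq.1 hq.2⟩
  have hsub (k : ℕ) : 1 - q ^ k ∈ Icc 0 1 := Icc.mem_iff_one_sub_mem.1 (hpow k)
  exact unitInterval.mul_mem (hsub m) ⟨sq_nonneg _, pow_le_one₀ (hsub n).1 (hsub n).2⟩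

lemma abs_lt_one_of_mem_Ico (hq : q ∈ Ico 0 1) : |q| < 1 := by
  rw [abs_of_nonneg hq.1]
  exact hq.2

theorem antitoneOn_jacobiThetaQ : AntitoneOn jacobiThetaQ (Ico 0 1) := fun _ hp _ hq hpq ↦
  hasProd_le_hasProd_of_nonneg
    (fun _ ↦ (one_sub_pow_mul_one_sub_pow_sq_mem_Icc _ _ (Ico_subset_Icc_self hq)).1)
    (fun _ ↦ antitoneOn_one_sub_pow_mul_one_sub_pow_sq _ _ (Ico_subset_Icc_self hp)
      (Ico_subset_Icc_self hq) hpq)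
    (hasProd_jacobiThetaQ (abs_lt_one_of_mem_Ico hq))
    (hasProd_jacobiThetaQ (abs_lt_one_of_mem_Ico hp))

lemma jacobiThetaQ_zero : jacobiThetaQ 0 = 1 := by
  simp [jacobiThetaQ]

lemma jacobiThetaQ_le_one (hq : q ∈ Ico 0 1) : jacobiThetaQ q ≤ 1 :=
  jacobiThetaQ_zero ▸ antitoneOn_jacobiThetaQ ⟨le_rfl, one_pos⟩ hq hq.1

lemma jacobiThetaQ_nonneg (hq : q ∈ Ico 0 1) : 0 ≤ jacobiThetaQ q :=
  hasProd_nonneg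
    (fun _ ↦ (one_sub_pow_mul_one_sub_pow_sq_mem_Icc _ _ (Ico_subset_Icc_self hq)).1)
    (hasProd_jacobiThetaQ (abs_lt_one_of_mem_Ico hq))

lemma jacobiThetaQ_le_one_sub_sq_mul (hq : q ∈ Ico 0 1) :
    jacobiThetaQ q ≤ (1 - q ^ 2) * (1 - q) ^ 2 := by
  have hfactor (j : ℕ) := one_sub_pow_mul_one_sub_pow_sq_mem_Icc (2 * (j + 1)) (2 * (j + 1) - 1)
    (Ico_subset_Icc_self hq)
  simpa using hasProd_le_apply_of_le_one (fun j ↦ (hfactor j).1) (fun j ↦ (hfactor j).2)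
    (hasProd_jacobiThetaQ (abs_lt_one_of_mem_Ico hq)) 0

lemma one_sub_two_mul_le_jacobiThetaQ (hq : q ∈ Ico 0 1) : 1 - 2 * q ≤ jacobiThetaQ q := by
  have hanti : Antitone fun n : ℕ ↦ q ^ ((n + 1) ^ 2) := fun m n hmn ↦
    pow_le_pow_of_le_one hq.1 hq.2.le (by gcongr)
  have halternating : HasSum (fun n : ℕ ↦ (-1) ^ n * q ^ ((n + 1) ^ 2))
      (-((jacobiThetaQ q - 1) / 2)) := by
    simpa only [jacobiThetaTerm_neg_one_add_one, pow_succ, mul_neg_one, neg_mul, neg_neg] using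
      (hasSum_jacobiThetaTerm_neg_one_add_one (abs_lt_one_of_mem_Ico hq)).neg
  have hle := hanti.tendsto_le_alternating_series halternating.tendsto_sum_nat 0
  simp only [mul_zero, zero_add, Finset.sum_range_one, pow_zero, one_pow, pow_one, one_mul] at hle
  linarith

theorem tendsto_jacobiThetaQ_nhdsGT_zero : Tendsto jacobiThetaQ (𝓝[>] 0) (𝓝 1) := by
  have hlower : Tendsto (fun q : ℝ ↦ 1 - 2 * q) (𝓝[>] 0) (𝓝 1) :=
    (Continuous.tendsto' (by fun_prop) 0 1 (by norm_num)).mono_left nhdsWithin_le_nhds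
  refine tendsto_of_tendsto_of_tendsto_of_le_of_le' hlower tendsto_const_nhds ?_ ?_ <;>
    filter_upwards [Ioo_mem_nhdsGT one_pos] with q hq
  · exact one_sub_two_mul_le_jacobiThetaQ (Ioo_subset_Ico_self hq)
  · exact jacobiThetaQ_le_one (Ioo_subset_Ico_self hq)

theorem tendsto_jacobiThetaQ_nhdsLT_one : Tendsto jacobiThetaQ (𝓝[<] 1) (𝓝 0) := by
  have hupper : Tendsto (fun q : ℝ ↦ (1 - q ^ 2) * (1 - q) ^ 2) (𝓝[<] 1) (𝓝 0) :=
    (Continuous.tendsto' (by fun_prop) 1 0 (by norm_num)).mono_left nhdsWithin_le_nhds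
  refine tendsto_of_tendsto_of_tendsto_of_le_of_le' tendsto_const_nhds hupper ?_ ?_ <;>
    filter_upwards [Ioo_mem_nhdsLT one_pos] with q hq
  · exact jacobiThetaQ_nonneg (Ioo_subset_Ico_self hq)
  · exact jacobiThetaQ_le_one_sub_sq_mul (Ioo_subset_Ico_self hq)

end Theta

/-- `q ↦ 1 - Θ(q)` is a valid distribution function on `[0,1]`: it is
nondecreasing on `[0,1)`, tends to `0` as `q → 0⁺`, tends to `1` as `q → 1⁻`,
and `Θ` has the Jacobi triple product representation on `[0,1)`. -/
theorem one_sub_theta_is_cdf :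
    MonotoneOn (fun q => 1 - jacobiThetaQ q) (Set.Ico (0 : ℝ) 1) ∧
    Filter.Tendsto (fun q => 1 - jacobiThetaQ q)
      (nhdsWithin 0 (Set.Ioi (0 : ℝ))) (nhds 0) ∧
    Filter.Tendsto (fun q => 1 - jacobiThetaQ q)
      (nhdsWithin 1 (Set.Iio (1 : ℝ))) (nhds 1) ∧
    ∀ q ∈ Set.Ico (0 : ℝ) 1,
      jacobiThetaQ q =
        ∏' j : ℕ, ((1 - q ^ (2 * (j + 1))) * (1 - q ^ (2 * (j + 1) - 1)) ^ 2) := by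
  refine ⟨fun p hp q hq hpq ↦ sub_le_sub_left (antitoneOn_jacobiThetaQ hp hq hpq) 1, ?_, ?_,
    fun q hq ↦ (hasProd_jacobiThetaQ (abs_lt_one_of_mem_Ico hq)).tprod_eq.symm⟩
  · simpa only [sub_self] using tendsto_jacobiThetaQ_nhdsGT_zero.const_sub 1
  · simpa only [sub_zero] using tendsto_jacobiThetaQ_nhdsLT_one.const_sub 1
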